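/- Let η : ℝ³ → ℝ³ be a C² map with invertible Jacobian ∇η at every point (entries ∂_l η_i), A := (∇η)⁻¹, ∂_i^η g := ∑_k A_{ki} ∂_k g, and let v : ℝ³ → ℝ³ be a C² vector field satisfying the transformed divergence-free condition ∑_{j=1}^{3} ∂_j^η v_j = 0 everywhere. Then for each i ∈ {1,2,3}, the transformed Laplacian equals the transformed divergence of the symmetric gradient: ∑_{j=1}^{3} ∂_j^η ∂_j^η v_i = ∑_{j=1}^{3} ∂_j^η ( (sym^η v)_{ij} ) at every point, where (sym^η v)_{ij} := ∂_j^η v_i + ∂_i^η v_j. -/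

import Mathlib

open scoped Matrix BigOperators

/-- Partial derivative `∂_l f` of a scalar function on `ℝ³`. -/
noncomputable def pd (f : (Fin 3 → ℝ) → ℝ) (l : Fin 3) (x : Fin 3 → ℝ) : ℝ :=
  fderiv ℝ f x (Pi.single l 1)

/-- Jacobian matrix `∇η` with entries `(∇η)_{il} = ∂_l η_i`. -/
noncomputable def Jac (η : (Fin 3 → ℝ) → Fin 3 → ℝ) (x : Fin 3 → ℝ) :
    Matrix (Fin 3) (Fin 3) ℝ :=
  Matrix.of fun i l => pd (fun y => η y i) l x

/-- Transformed derivative `∂_i^η g = ∑_k A_{ki} ∂_k g`, where `A = (∇η)⁻¹`. -/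
noncomputable def Deta (η : (Fin 3 → ℝ) → Fin 3 → ℝ) (f : (Fin 3 → ℝ) → ℝ)
    (i : Fin 3) (x : Fin 3 → ℝ) : ℝ :=
  ∑ k, (Jac η x)⁻¹ k i * pd f k x

/-! Locally `η` is a `C²` diffeomorphism, so a `C²` function factors as `f = g ∘ η`, and by the
chain rule `∂_w^η f = (∂_w g) ∘ η`: the transformed derivatives are ordinary directional derivatives
in the coordinates `η`. By Schwarz's theorem they commute, hence
`∑_j ∂_j^η (∂_j^η v_i + ∂_i^η v_j) = ∑_j ∂_j^η ∂_j^η v_i + ∂_i^η (∑_j ∂_j^η v_j)`. -/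

open Filter Topology

section NontriviallyNormedField

variable {𝕜 E F G ι : Type*} [NontriviallyNormedField 𝕜]
  [NormedAddCommGroup E] [NormedSpace 𝕜 E] [NormedAddCommGroup F] [NormedSpace 𝕜 F]
  [NormedAddCommGroup G] [NormedSpace 𝕜 G] {η : E → F} {x : E}

variable (𝕜) in
/-- The transformed derivative `∂_w^η f` at `x`, that is `Df(x) (Dη(x)⁻¹ w)`, free of coordinates;
`Deta η f i` is the case of the `i`-th standard basis vector `w`. It is `0` where `Dη(x)` is not
invertible. -/
noncomputable def transformedDeriv (η : E → F) (f : E → G) (w : F) (x : E) : G :=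
  fderiv 𝕜 f x ((fderiv 𝕜 η x).inverse w)

lemma transformedDeriv_add {f g : E → G} (hf : DifferentiableAt 𝕜 f x)
    (hg : DifferentiableAt 𝕜 g x) (w : F) :
    transformedDeriv 𝕜 η (fun y => f y + g y) w x
      = transformedDeriv 𝕜 η f w x + transformedDeriv 𝕜 η g w x := by
  simp only [transformedDeriv, fderiv_fun_add hf hg, add_apply]

lemma transformedDeriv_sum {s : Finset ι} {f : ι → E → G}
    (hf : ∀ j ∈ s, DifferentiableAt 𝕜 (f j) x) (w : F) :
    transformedDeriv 𝕜 η (fun y => ∑ j ∈ s, f j y) w x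
      = ∑ j ∈ s, transformedDeriv 𝕜 η (f j) w x := by
  simp only [transformedDeriv, fderiv_fun_sum hf, sum_apply]

lemma transformedDeriv_const (c : G) (w : F) : transformedDeriv 𝕜 η (fun _ => c) w x = 0 := by
  simp [transformedDeriv]

lemma transformedDeriv_congr {f g : E → G} (h : f =ᶠ[𝓝 x] g) (w : F) :
    transformedDeriv 𝕜 η f w x = transformedDeriv 𝕜 η g w x := by
  simp only [transformedDeriv, h.fderiv_eq]

lemma transformedDeriv_eventuallyEq {f g : E → G} (h : f =ᶠ[𝓝 x] g) (w : F) :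
    transformedDeriv 𝕜 η f w =ᶠ[𝓝 x] transformedDeriv 𝕜 η g w :=
  h.eventuallyEq_nhds.mono fun _ hy => transformedDeriv_congr hy w

lemma transformedDeriv_comp {g : F → G} (hg : DifferentiableAt 𝕜 g (η x))
    (hη : DifferentiableAt 𝕜 η x) (hinv : (fderiv 𝕜 η x).IsInvertible) (w : F) :
    transformedDeriv 𝕜 η (g ∘ η) w x = fderiv 𝕜 g (η x) w := by
  rw [transformedDeriv, fderiv_comp x hg hη, ContinuousLinearMap.comp_apply,
    hinv.self_apply_inverse]

lemma eventually_isInvertible_fderiv [CompleteSpace E] (hη : ContDiffAt 𝕜 1 η x)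
    (hinv : (fderiv 𝕜 η x).IsInvertible) : ∀ᶠ y in 𝓝 x, (fderiv 𝕜 η y).IsInvertible := by
  obtain ⟨e, he⟩ := hinv
  have hcont : ContinuousAt (fderiv 𝕜 η) x := hη.continuousAt_fderiv one_ne_zero
  exact hcont.eventually_mem (he ▸ e.nhds)

lemma transformedDeriv_comp_eventuallyEq [CompleteSpace E] {g : F → G}
    (hg : ContDiffAt 𝕜 1 g (η x)) (hη : ContDiffAt 𝕜 1 η x)
    (hinv : (fderiv 𝕜 η x).IsInvertible) (w : F) :
    transformedDeriv 𝕜 η (g ∘ η) w =ᶠ[𝓝 x] (fun z => fderiv 𝕜 g z w) ∘ η := by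
  filter_upwards [hη.continuousAt.eventually (hg.eventually (by simp)), hη.eventually (by simp),
    eventually_isInvertible_fderiv hη hinv] with y hgy hηy hinvy
  exact transformedDeriv_comp (hgy.differentiableAt one_ne_zero)
    (hηy.differentiableAt one_ne_zero) hinvy w

end NontriviallyNormedField

section RCLike

variable {𝕜 E F G ι : Type*} [RCLike 𝕜]
  [NormedAddCommGroup E] [NormedSpace 𝕜 E] [CompleteSpace E]
  [NormedAddCommGroup F] [NormedSpace 𝕜 F] [NormedAddCommGroup G] [NormedSpace 𝕜 G]
  {η : E → F} {f : E → G} {x : E}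

lemma exists_contDiffAt_eventuallyEq_comp {n : WithTop ℕ∞} (hn : n ≠ 0)
    (hη : ContDiffAt 𝕜 n η x) (hinv : (fderiv 𝕜 η x).IsInvertible) (hf : ContDiffAt 𝕜 n f x) :
    ∃ g : F → G, ContDiffAt 𝕜 n g (η x) ∧ f =ᶠ[𝓝 x] g ∘ η := by
  obtain ⟨e, he⟩ := hinv
  have hη' : HasFDerivAt η (e : E →L[𝕜] F) x := he ▸ (hη.differentiableAt hn).hasFDerivAt
  let ηinv : F → E := hη.localInverse hη' hn
  have hηinv_image : ηinv (η x) = x := hη.localInverse_apply_image hη' hn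
  have hηinv_left : ∀ᶠ y in 𝓝 x, ηinv (η y) = y :=
    (hη.hasStrictFDerivAt' hη' hn).eventually_left_inverse
  refine ⟨f ∘ ηinv, ContDiffAt.comp _ (hηinv_image.symm ▸ hf) (hη.to_localInverse hη' hn), ?_⟩
  filter_upwards [hηinv_left] with y hy
  exact congrArg f hy.symm

lemma exists_contDiffAt_transformedDeriv_eventuallyEq (hη : ContDiffAt 𝕜 2 η x)
    (hinv : (fderiv 𝕜 η x).IsInvertible) (hf : ContDiffAt 𝕜 2 f x) :
    ∃ g : F → G, ContDiffAt 𝕜 2 g (η x) ∧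
      ∀ w, transformedDeriv 𝕜 η f w =ᶠ[𝓝 x] (fun z => fderiv 𝕜 g z w) ∘ η := by
  obtain ⟨g, hg, hfg⟩ := exists_contDiffAt_eventuallyEq_comp two_ne_zero hη hinv hf
  refine ⟨g, hg, fun w => (transformedDeriv_eventuallyEq hfg w).trans ?_⟩
  exact transformedDeriv_comp_eventuallyEq (hg.of_le one_le_two) (hη.of_le one_le_two) hinv w

lemma differentiableAt_transformedDeriv (hη : ContDiffAt 𝕜 2 η x)
    (hinv : (fderiv 𝕜 η x).IsInvertible) (hf : ContDiffAt 𝕜 2 f x) (w : F) :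
    DifferentiableAt 𝕜 (transformedDeriv 𝕜 η f w) x := by
  obtain ⟨g, hg, hfg⟩ := exists_contDiffAt_transformedDeriv_eventuallyEq hη hinv hf
  have hg' : DifferentiableAt 𝕜 (fderiv 𝕜 g) (η x) :=
    (hg.fderiv_right one_add_one_eq_two.le).differentiableAt one_ne_zero
  refine DifferentiableAt.congr_of_eventuallyEq ?_ (hfg w)
  exact (hg'.clm_apply (differentiableAt_const w)).comp x (hη.differentiableAt two_ne_zero)

lemma transformedDeriv_comm (hη : ContDiffAt 𝕜 2 η x) (hinv : (fderiv 𝕜 η x).IsInvertible)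
    (hf : ContDiffAt 𝕜 2 f x) (u w : F) :
    transformedDeriv 𝕜 η (transformedDeriv 𝕜 η f u) w x
      = transformedDeriv 𝕜 η (transformedDeriv 𝕜 η f w) u x := by
  obtain ⟨g, hg, hfg⟩ := exists_contDiffAt_transformedDeriv_eventuallyEq hη hinv hf
  have hg' : DifferentiableAt 𝕜 (fderiv 𝕜 g) (η x) :=
    (hg.fderiv_right one_add_one_eq_two.le).differentiableAt one_ne_zero
  have hsecond (a b : F) : transformedDeriv 𝕜 η (transformedDeriv 𝕜 η f a) b x
      = fderiv 𝕜 (fderiv 𝕜 g) (η x) b a := by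
    rw [transformedDeriv_congr (hfg a), transformedDeriv_comp
      (hg'.clm_apply (differentiableAt_const a)) (hη.differentiableAt two_ne_zero) hinv,
      fderiv_clm_apply hg' (differentiableAt_const a)]
    simp
  rw [hsecond, hsecond]
  exact hg.isSymmSndFDerivAt (by simp) w u

variable [Fintype ι] {e : ι → F} {v : ι → E → G}

lemma sum_transformedDeriv_symmGrad (hη : ContDiffAt 𝕜 2 η x)
    (hinv : (fderiv 𝕜 η x).IsInvertible) (hv : ∀ j, ContDiffAt 𝕜 2 (v j) x) (i : ι) :
    ∑ j, transformedDeriv 𝕜 η (fun y => transformedDeriv 𝕜 η (v i) (e j) y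
        + transformedDeriv 𝕜 η (v j) (e i) y) (e j) x
      = ∑ j, transformedDeriv 𝕜 η (transformedDeriv 𝕜 η (v i) (e j)) (e j) x
        + transformedDeriv 𝕜 η (fun y => ∑ j, transformedDeriv 𝕜 η (v j) (e j) y) (e i) x := by
  have hdiff (j k : ι) : DifferentiableAt 𝕜 (transformedDeriv 𝕜 η (v j) (e k)) x :=
    differentiableAt_transformedDeriv hη hinv (hv j) (e k)
  rw [transformedDeriv_sum fun j _ => hdiff j j, ← Finset.sum_add_distrib]
  refine Finset.sum_congr rfl fun j _ => ?_
  rw [transformedDeriv_add (hdiff i j) (hdiff j i), transformedDeriv_comm hη hinv (hv j)]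

theorem laplacian_eq_div_sym_general (hη : ContDiffAt 𝕜 2 η x)
    (hinv : (fderiv 𝕜 η x).IsInvertible) (hv : ∀ j, ContDiffAt 𝕜 2 (v j) x)
    (hdiv : ∀ᶠ y in 𝓝 x, ∑ j, transformedDeriv 𝕜 η (v j) (e j) y = 0) (i : ι) :
    ∑ j, transformedDeriv 𝕜 η (transformedDeriv 𝕜 η (v i) (e j)) (e j) x
      = ∑ j, transformedDeriv 𝕜 η (fun y => transformedDeriv 𝕜 η (v i) (e j) y
          + transformedDeriv 𝕜 η (v j) (e i) y) (e j) x := by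
  rw [sum_transformedDeriv_symmGrad hη hinv hv, transformedDeriv_congr hdiv,
    transformedDeriv_const, add_zero]

end RCLike

section Coordinates

variable {η : (Fin 3 → ℝ) → Fin 3 → ℝ} {x : Fin 3 → ℝ}

lemma fderiv_apply_eq_sum_pd (f : (Fin 3 → ℝ) → ℝ) (x w : Fin 3 → ℝ) :
    fderiv ℝ f x w = ∑ k, w k * pd f k x := by
  conv_lhs => rw [← Finset.univ_sum_single w]
  rw [map_sum]
  refine Finset.sum_congr rfl fun k _ => ?_
  rw [pd, ← smul_eq_mul, ← map_smul, ← Pi.single_smul, smul_eq_mul, mul_one]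

lemma fderiv_apply_eq_Jac_mulVec (hη : DifferentiableAt ℝ η x) (w : Fin 3 → ℝ) :
    fderiv ℝ η x w = Jac η x *ᵥ w := by
  funext i
  rw [fderiv_pi fun i => differentiableAt_pi.1 hη i, ContinuousLinearMap.pi_apply,
    fderiv_apply_eq_sum_pd]
  exact Finset.sum_congr rfl fun k _ => mul_comm _ _

lemma isInvertible_fderiv_of_isUnit_Jac (hη : DifferentiableAt ℝ η x)
    (hinv : IsUnit (Jac η x)) : (fderiv ℝ η x).IsInvertible := by
  have hdet : IsUnit (Jac η x).det := (Matrix.isUnit_iff_isUnit_det _).1 hinv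
  refine .of_inverse (g := (Matrix.toLin' (Jac η x)⁻¹).toContinuousLinearMap) ?_ ?_ <;> ext1 w
  · simp [fderiv_apply_eq_Jac_mulVec hη, Matrix.mul_nonsing_inv _ hdet]
  · simp [fderiv_apply_eq_Jac_mulVec hη, Matrix.nonsing_inv_mul _ hdet]

lemma Deta_eq_transformedDeriv (hη : DifferentiableAt ℝ η x) (hinv : IsUnit (Jac η x))
    (f : (Fin 3 → ℝ) → ℝ) (i : Fin 3) :
    Deta η f i x = transformedDeriv ℝ η f (Pi.single i 1) x := by
  have hdet : IsUnit (Jac η x).det := (Matrix.isUnit_iff_isUnit_det _).1 hinv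
  have hcol : (fderiv ℝ η x).inverse (Pi.single i 1) = (Jac η x)⁻¹.col i := by
    rw [(isInvertible_fderiv_of_isUnit_Jac hη hinv).inverse_apply_eq,
      fderiv_apply_eq_Jac_mulVec hη, ← Matrix.mulVec_single_one, Matrix.mulVec_mulVec,
      Matrix.mul_nonsing_inv _ hdet, Matrix.one_mulVec]
  rw [transformedDeriv, hcol, fderiv_apply_eq_sum_pd]
  rfl

end Coordinates

/-- If `div^η v = 0`, then `Δ^η v = div^η (sym^η v)`:
`∑_j ∂_j^η ∂_j^η v_i = ∑_j ∂_j^η ( ∂_j^η v_i + ∂_i^η v_j )`. -/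
theorem laplacian_eq_div_sym
    (η : (Fin 3 → ℝ) → Fin 3 → ℝ) (hη : ContDiff ℝ 2 η)
    (hinv : ∀ x, IsUnit (Jac η x))
    (v : (Fin 3 → ℝ) → Fin 3 → ℝ) (hv : ContDiff ℝ 2 v)
    (hdiv : ∀ x, ∑ j, Deta η (fun z => v z j) j x = 0)
    (i : Fin 3) (x : Fin 3 → ℝ) :
    ∑ j, Deta η (fun y => Deta η (fun z => v z i) j y) j x
      = ∑ j, Deta η
          (fun y => Deta η (fun z => v z i) j y + Deta η (fun z => v z j) i y) j x := by
  have hηx (y) : DifferentiableAt ℝ η y := hη.differentiable two_ne_zero y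
  simp only [Deta_eq_transformedDeriv (hηx _) (hinv _)] at hdiv ⊢
  exact laplacian_eq_div_sym_general hη.contDiffAt
    (isInvertible_fderiv_of_isUnit_Jac (hηx x) (hinv x)) (fun j => (contDiff_pi.1 hv j).contDiffAt)
    (.of_forall hdiv) i
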